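/- Let n ≥ 2 and 0 < α < 1. Let Ω ⊂ ℝⁿ be a bounded domain with 0 ∈ ∂Ω, with ∂Ω ∈ C^{1,α}(0) (so that in these coordinates the inner unit normal of ∂Ω at 0 is e_n). Let u solve Δu = 1 in Ω∩B₁ with u = 0 and |Du| = 0 on ∂Ω∩B₁ (u continuous on Ω̄∩B₁, twice differentiable in Ω∩B₁, C¹ up to ∂Ω∩B₁), and suppose u ∈ C^{2,α}(0), with P₂ the quadratic polynomial from the definition of C^{2,α}(0). Then P₂(x) = x_n²/2; equivalently u(0) = 0, Du(0) = 0, D²u(0)·e_i·e_j = 0 whenever (i,j) ≠ (n,n), and D²u(0)·e_n·e_n = 1. -/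

import Mathlib

open MvPolynomial Metric Set MeasureTheory Bornology

noncomputable section

/-- `ℝⁿ` with the Euclidean norm. -/
abbrev En (n : ℕ) := EuclideanSpace ℝ (Fin n)

variable {n : ℕ}

/-- Evaluation of a multivariate polynomial at a point of `ℝⁿ`. -/
def peval (P : MvPolynomial (Fin n) ℝ) (x : En n) : ℝ :=
  MvPolynomial.eval (fun i => x i) P

/-- Total degree of a monomial (multi-index). -/
def mdeg (d : Fin n →₀ ℕ) : ℕ := d.sum fun _ e => e

/-- `σ!` for a multi-index `σ`. -/
def mfact (d : Fin n →₀ ℕ) : ℕ := d.prod fun _ e => Nat.factorial e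

/-- The norm `‖P‖ = Σ_σ |a_σ|` of a polynomial `P = Σ_σ (a_σ/σ!) x^σ`. -/
def pnorm (P : MvPolynomial (Fin n) ℝ) : ℝ :=
  ∑ d ∈ P.support, (mfact d : ℝ) * |MvPolynomial.coeff d P|

/-- `|D^i P(0)|`, the Euclidean norm of the `i`-th derivative of `P` at `0`. -/
def derivNorm (i : ℕ) (P : MvPolynomial (Fin n) ℝ) : ℝ :=
  Real.sqrt (∑ d ∈ P.support.filter (fun d => mdeg d = i),
    ((mfact d : ℝ) * MvPolynomial.coeff d P) ^ 2)

/-- Polynomial Laplacian. -/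
def plap (P : MvPolynomial (Fin n) ℝ) : MvPolynomial (Fin n) ℝ :=
  ∑ i, MvPolynomial.pderiv i (MvPolynomial.pderiv i P)

/-- The index of the last coordinate. -/
def lastIdx (n : ℕ) [NeZero n] : Fin n :=
  ⟨n - 1, Nat.sub_lt (Nat.pos_of_ne_zero (NeZero.ne n)) Nat.one_pos⟩

variable [NeZero n]

/-- The last coordinate `x_n`. -/
def xn (x : En n) : ℝ := x (lastIdx n)

/-- `|x′|`, the norm of the first `n-1` coordinates. -/
def xpn (x : En n) : ℝ :=
  Real.sqrt (∑ i ∈ Finset.univ.erase (lastIdx n), (x i) ^ 2)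

/-- Substitution of the polynomial `q` for the last variable `x_n`. -/
def substLast (q P : MvPolynomial (Fin n) ℝ) : MvPolynomial (Fin n) ℝ :=
  MvPolynomial.aeval (fun i => if i = lastIdx n then q else MvPolynomial.X i) P

/-- The pointwise Laplacian of `u` at `x` (sum of pure second derivatives). -/
def lapAt (u : En n → ℝ) (x : En n) : ℝ :=
  ∑ i, fderiv ℝ (fderiv ℝ u) x (EuclideanSpace.single i 1) (EuclideanSpace.single i 1)

/-- `u` is a (classical) solution of `Δu = f` in `Ω ∩ B₁`, `u = g` on `∂Ω ∩ B₁`. -/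
def SolvesDirichlet (Ω : Set (En n)) (u f g : En n → ℝ) : Prop :=
  ContinuousOn u (closure Ω ∩ ball 0 1) ∧
  (∀ x ∈ Ω ∩ ball (0 : En n) 1,
    DifferentiableAt ℝ u x ∧ DifferentiableAt ℝ (fderiv ℝ u) x ∧ lapAt u x = f x) ∧
  (∀ x ∈ frontier Ω ∩ ball (0 : En n) 1, u x = g x)

/-- `u` is a (classical) solution of the oblique derivative problem `Δu = f` in `Ω ∩ B₁`,
`β·Du = g` on `∂Ω ∩ B₁`, with `‖β‖_∞ ≤ 1` and `β·e_n ≥ a₀`; `Du` is the (continuous up to the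
boundary) gradient of `u`. -/
def SolvesOblique (Ω : Set (En n)) (u f g : En n → ℝ) (β Du : En n → En n) (a₀ : ℝ) : Prop :=
  ContinuousOn u (closure Ω ∩ ball 0 1) ∧
  ContinuousOn Du (closure Ω ∩ ball 0 1) ∧
  (∀ x ∈ Ω ∩ ball (0 : En n) 1,
    DifferentiableAt ℝ u x ∧ (∀ i, fderiv ℝ u x (EuclideanSpace.single i 1) = Du x i) ∧
    DifferentiableAt ℝ (fderiv ℝ u) x ∧ lapAt u x = f x) ∧
  (∀ x ∈ frontier Ω ∩ ball (0 : En n) 1,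
    (∑ i, β x i * Du x i) = g x ∧ ‖β x‖ ≤ 1 ∧ a₀ ≤ β x (lastIdx n))

/-- `∂Ω ∈ C^{m,α}(0)` with polynomial `P_Ω = P` and constant `K`. -/
def DomainCmα (m : ℕ) (α K : ℝ) (P : MvPolynomial (Fin n) ℝ) (Ω : Set (En n)) : Prop :=
  P.totalDegree ≤ m ∧ MvPolynomial.coeff 0 P = 0 ∧
  MvPolynomial.pderiv (lastIdx n) P = 0 ∧
  (1 ≤ m → ∀ i, MvPolynomial.coeff (Finsupp.single i 1) P = 0) ∧
  (∀ x : En n, ‖x‖ < 1 → xn x > peval P x + K * (xpn x) ^ ((m : ℝ) + α) → x ∈ Ω) ∧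
  (∀ x : En n, ‖x‖ < 1 → xn x < peval P x - K * (xpn x) ^ ((m : ℝ) + α) → x ∉ Ω)

/-- `∂Ω ∈ C^{1,α}(0)` with constant `K` (the degree-one polynomial is necessarily `0`). -/
def Domain1α (α K : ℝ) (Ω : Set (En n)) : Prop :=
  (∀ x : En n, ‖x‖ < 1 → xn x > K * (xpn x) ^ ((1 : ℝ) + α) → x ∈ Ω) ∧
  (∀ x : En n, ‖x‖ < 1 → xn x < -(K * (xpn x) ^ ((1 : ℝ) + α)) → x ∉ Ω)

/-- `[∂Ω∩B₁]_{C^{0,1}(0)} ≤ δ`. -/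
def DomainLip (δ : ℝ) (Ω : Set (En n)) : Prop :=
  (∀ x : En n, ‖x‖ < 1 → xn x > δ * xpn x → x ∈ Ω) ∧
  (∀ x : En n, ‖x‖ < 1 → xn x < -(δ * xpn x) → x ∉ Ω)

/-- `osc_{B₁} ∂Ω ≤ δ`. -/
def FrontierOscLe (Ω : Set (En n)) (δ : ℝ) : Prop :=
  ∀ x ∈ frontier Ω ∩ ball (0 : En n) 1, ∀ y ∈ frontier Ω ∩ ball (0 : En n) 1,
    xn x - xn y ≤ δ

/-- The `L^n` norm of `f` on a set `S ⊆ ℝⁿ`. -/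
def LnNorm (n : ℕ) (S : Set (En n)) (f : En n → ℝ) : ℝ :=
  (∫ x in S, |f x| ^ (n : ℝ)) ^ ((n : ℝ)⁻¹)

/-- `∂Ω` is `C^{m,α}` at the point `x₀` with constants `K, r₀`: after an isometric change of
coordinates `φ` taking `x₀` to `0`, the boundary is trapped between `P_Ω(x′) ± K|x′|^{m+α}`. -/
def BoundaryPtCmα (m : ℕ) (α K r₀ : ℝ) (Ω : Set (En n)) (x₀ : En n) : Prop :=
  ∃ (φ : En n ≃ᵢ En n) (P : MvPolynomial (Fin n) ℝ), φ x₀ = 0 ∧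
    P.totalDegree ≤ m ∧ MvPolynomial.coeff 0 P = 0 ∧
    MvPolynomial.pderiv (lastIdx n) P = 0 ∧
    (1 ≤ m → ∀ i, MvPolynomial.coeff (Finsupp.single i 1) P = 0) ∧
    (∀ y : En n, ‖y‖ < r₀ → xn y > peval P y + K * (xpn y) ^ ((m : ℝ) + α) → φ.symm y ∈ Ω) ∧
    (∀ y : En n, ‖y‖ < r₀ → xn y < peval P y - K * (xpn y) ^ ((m : ℝ) + α) → φ.symm y ∉ Ω)

/-- `∂Ω ∩ B₁ ∈ C^{m,α}`: pointwise `C^{m,α}` with constants uniform on compact subsets. -/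
def BoundaryCmα (m : ℕ) (α : ℝ) (Ω : Set (En n)) : Prop :=
  ∀ S : Set (En n), IsCompact S → S ⊆ frontier Ω ∩ ball (0 : En n) 1 →
    ∃ K r₀ : ℝ, 0 ≤ K ∧ 0 < r₀ ∧ ∀ x₀ ∈ S, BoundaryPtCmα m α K r₀ Ω x₀

/-- `∂Ω ∩ B₁ ∈ C^∞`. -/
def BoundarySmooth (Ω : Set (En n)) : Prop :=
  ∀ m : ℕ, 1 ≤ m → ∀ α : ℝ, 0 < α → α ≤ 1 → BoundaryCmα m α Ω

/-- `u ∈ C^∞(Ω̄ ∩ B₁)`: near every point of `Ω̄ ∩ B₁`, `u` agrees on `Ω` with a globally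
smooth function. -/
def SmoothUpToBoundary (Ω : Set (En n)) (u : En n → ℝ) : Prop :=
  ∀ x₀ ∈ closure Ω ∩ ball (0 : En n) 1, ∃ ε : ℝ, 0 < ε ∧ ∃ v : En n → ℝ,
    ContDiff ℝ (⊤ : ℕ∞) v ∧ ∀ x ∈ Ω ∩ ball x₀ ε, v x = u x

/-!
Extend `u` by zero to `w = Ω.indicator u`. Since `u` and its gradient vanish on the free boundary,
`w` has zero derivative at every point outside `Ω` near `0`. In particular `w = o(|x|)`, which kills
the constant and linear terms of `P₂`. The quadratic part is `o(|z|²)` along the free boundary,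
whose tangent directions at `0` fill the hyperplane `{x_n = 0}`, so it vanishes there, which gives
`P₂(x) = x_n M(x)` with `M` linear and `w(x) = x_n⁺ M(x) + o(|x|²)`.

If `M(p) < 0` for some `p` with `p_n = 0`, then near `r p` the function `w` looks like a concave
kink, and a paraboloid with very negative Laplacian and nonzero slope touches it from above. At the
touching point either the lower bound on `Δu` or the vanishing of the derivative of `w` fails.
Applied to `±p` this gives `P₂(x) = c x_n²`. Finally `u - c x_n² = o(|x|²)` has a Laplacian tending
to `1 - 2c`, which must vanish by comparison with small paraboloids on balls inside `Ω`.
-/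

open Filter Topology Asymptotics

section FirstOrder

variable {E F : Type*} [NormedAddCommGroup E] [NormedSpace ℝ E] [NormedAddCommGroup F]
  [NormedSpace ℝ F] {Ω : Set E} {u : E → F}

theorem norm_le_of_tendsto_zero_of_norm_fderiv_le {y z : E} {c : ℝ} (hzy : z ≠ y)
    (hu : ∀ x ∈ ball y (dist z y), DifferentiableAt ℝ u x ∧ ‖fderiv ℝ u x‖ ≤ c)
    (hz : Tendsto u (𝓝[ball y (dist z y)] z) (𝓝 0)) : ‖u y‖ ≤ c * dist z y := by
  have hpos : 0 < dist z y := dist_pos.2 hzy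
  have : (𝓝[ball y (dist z y)] z).NeBot := by
    rw [← mem_closure_iff_nhdsWithin_neBot, closure_ball y hpos.ne']
    exact mem_closedBall.2 le_rfl
  have hmvt : ∀ᶠ x in 𝓝[ball y (dist z y)] z, ‖u y - u x‖ ≤ c * ‖y - x‖ :=
    eventually_nhdsWithin_of_forall fun x hx =>
      (convex_ball y (dist z y)).norm_image_sub_le_of_norm_fderiv_le (fun p hp => (hu p hp).1)
        (fun p hp => (hu p hp).2) hx (mem_ball_self hpos)
  have hrhs : Tendsto (fun x => c * ‖y - x‖) (𝓝[ball y (dist z y)] z) (𝓝 (c * ‖y - z‖)) :=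
    (Continuous.tendsto (by fun_prop) z).mono_left nhdsWithin_le_nhds
  simpa [dist_eq_norm, norm_sub_rev] using
    le_of_tendsto_of_tendsto (hz.const_sub (u y)).norm hrhs hmvt

variable [ProperSpace E]

theorem exists_mem_frontier_ball_subset (hΩ : IsOpen Ω) {x₀ y : E} (hx₀ : x₀ ∉ Ω) (hy : y ∈ Ω) :
    ∃ z ∈ frontier Ω, z ≠ y ∧ ball y (dist z y) ⊆ Ω ∧ dist z y ≤ dist y x₀ := by
  obtain ⟨z, hz, hdist⟩ := hΩ.isClosed_compl.exists_infDist_eq_dist ⟨x₀, hx₀⟩ y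
  rw [dist_comm] at hdist
  have hzy : z ≠ y := by rintro rfl; exact hz hy
  have hball : ball y (dist z y) ⊆ Ω := by
    rw [← hdist]
    exact disjoint_compl_right_iff_subset.1 disjoint_ball_infDist
  have hzcl : z ∈ closure (ball y (dist z y)) := by
    rw [closure_ball y (dist_pos.2 hzy).ne']
    exact mem_closedBall.2 le_rfl
  refine ⟨z, ?_, hzy, hball, hdist ▸ infDist_le_dist_of_mem hx₀⟩
  rw [hΩ.frontier_eq]
  exact ⟨closure_mono hball hzcl, hz⟩

theorem hasFDerivAt_indicator_zero (hΩ : IsOpen Ω) {x₀ : E} (hx₀ : x₀ ∉ Ω)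
    (hdiff : ∀ᶠ x in 𝓝[Ω] x₀, DifferentiableAt ℝ u x)
    (hfderiv : Tendsto (fderiv ℝ u) (𝓝[Ω] x₀) (𝓝 0))
    (hfr : ∀ᶠ z in 𝓝[frontier Ω] x₀, Tendsto u (𝓝[Ω] z) (𝓝 0)) :
    HasFDerivAt (Ω.indicator u) (0 : E →L[ℝ] F) x₀ := by
  rw [hasFDerivAt_iff_isLittleO, isLittleO_iff]
  intro c hc
  have hsmall : ∀ᶠ x in 𝓝[Ω] x₀, DifferentiableAt ℝ u x ∧ ‖fderiv ℝ u x‖ ≤ c :=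
    hdiff.and (hfderiv.norm.eventually_le_const (by simpa using hc))
  obtain ⟨ε, hε, hεball⟩ := Metric.eventually_nhds_iff_ball.1
    ((eventually_nhdsWithin_iff.1 hsmall).and (eventually_nhdsWithin_iff.1 hfr))
  filter_upwards [ball_mem_nhds x₀ (half_pos hε)] with y hy
  simp only [indicator_of_notMem hx₀, sub_zero, zero_apply]
  by_cases hyΩ : y ∈ Ω
  · obtain ⟨z, hzfr, hzy, hball, hle⟩ := exists_mem_frontier_ball_subset hΩ hx₀ hyΩ
    rw [mem_ball] at hy
    have hnear : ∀ x, dist x y ≤ dist z y → x ∈ ball x₀ ε := fun x hx => by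
      rw [mem_ball]
      linarith [dist_triangle x y x₀]
    rw [indicator_of_mem hyΩ]
    calc ‖u y‖ ≤ c * dist z y := norm_le_of_tendsto_zero_of_norm_fderiv_le hzy
          (fun x hx => (hεball x (hnear x (mem_ball.1 hx).le)).1 (hball hx))
          (((hεball z (hnear z le_rfl)).2 hzfr).mono_left (nhdsWithin_mono z hball))
      _ ≤ c * ‖y - x₀‖ := by rw [← dist_eq_norm]; gcongr
  · simp only [indicator_of_notMem hyΩ, norm_zero]
    positivity

theorem eventually_hasFDerivAt_indicator_zero (hΩ : IsOpen Ω) {x₀ : E}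
    (hdiff : ∀ᶠ x in 𝓝[Ω] x₀, DifferentiableAt ℝ u x)
    (hfr : ∀ᶠ z in 𝓝[frontier Ω] x₀,
      Tendsto u (𝓝[Ω] z) (𝓝 0) ∧ Tendsto (fderiv ℝ u) (𝓝[Ω] z) (𝓝 0)) :
    ∀ᶠ x in 𝓝[Ωᶜ] x₀, HasFDerivAt (Ω.indicator u) (0 : E →L[ℝ] F) x := by
  rw [eventually_nhdsWithin_iff] at hdiff hfr ⊢
  filter_upwards [hdiff.eventually_nhds, hfr.eventually_nhds] with x hdiffx hfrx hxΩ
  refine hasFDerivAt_indicator_zero hΩ hxΩ (eventually_nhdsWithin_iff.2 hdiffx) ?_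
    (eventually_nhdsWithin_iff.2 (hfrx.mono fun z hz hzfr => (hz hzfr).1))
  by_cases hxcl : x ∈ closure Ω
  · exact (hfrx.self_of_nhds (hΩ.frontier_eq ▸ ⟨hxcl, hxΩ⟩)).2
  · rw [notMem_closure_iff_nhdsWithin_eq_bot.1 hxcl]
    exact tendsto_bot

end FirstOrder

section SecondOrder

theorem deriv_deriv_nonpos_of_isLocalMax {f : ℝ → ℝ} {t : ℝ} (hmax : IsLocalMax f t)
    (hf : ContinuousAt f t) : deriv (deriv f) t ≤ 0 := by
  by_contra! hpos
  have hconst : f =ᶠ[𝓝 t] fun _ => f t := by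
    filter_upwards [hmax, isLocalMin_of_deriv_deriv_pos hpos hmax.deriv_eq_zero hf] with s hle hge
    exact le_antisymm hle hge
  have hzero : deriv (deriv f) t = 0 := by simp [hconst.deriv.deriv_eq]
  exact hpos.ne' hzero

variable {E : Type*} [NormedAddCommGroup E] [NormedSpace ℝ E] {f g : E → ℝ} {x : E}

/-- `f` is twice differentiable at `x`: it is differentiable near `x` and its derivative is
differentiable at `x`. No continuity of the second derivative is required. -/
def TwiceDifferentiableAt (f : E → ℝ) (x : E) : Prop :=
  (∀ᶠ y in 𝓝 x, DifferentiableAt ℝ f y) ∧ DifferentiableAt ℝ (fderiv ℝ f) x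

theorem TwiceDifferentiableAt.continuousAt (hf : TwiceDifferentiableAt f x) : ContinuousAt f x :=
  hf.1.self_of_nhds.continuousAt

theorem TwiceDifferentiableAt.congr (hf : TwiceDifferentiableAt f x) (hfg : g =ᶠ[𝓝 x] f) :
    TwiceDifferentiableAt g x := by
  refine ⟨?_, hf.2.congr_of_eventuallyEq hfg.fderiv⟩
  filter_upwards [hf.1, hfg.eventually_nhds] with y hy hfgy
  exact hy.congr_of_eventuallyEq hfgy

theorem TwiceDifferentiableAt.neg (hf : TwiceDifferentiableAt f x) :
    TwiceDifferentiableAt (fun y => -f y) x := by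
  refine ⟨hf.1.mono fun y hy => hy.neg, ?_⟩
  have hfderiv : fderiv ℝ (fun y => -f y) = fun y => -fderiv ℝ f y := funext fun _ => fderiv_fun_neg
  rw [hfderiv]
  exact hf.2.neg

theorem TwiceDifferentiableAt.fderiv_sub (hf : TwiceDifferentiableAt f x)
    (hg : TwiceDifferentiableAt g x) :
    fderiv ℝ (fun y => f y - g y) =ᶠ[𝓝 x] fun y => fderiv ℝ f y - fderiv ℝ g y := by
  filter_upwards [hf.1, hg.1] with y hfy hgy using fderiv_fun_sub hfy hgy

theorem TwiceDifferentiableAt.sub (hf : TwiceDifferentiableAt f x)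
    (hg : TwiceDifferentiableAt g x) : TwiceDifferentiableAt (fun y => f y - g y) x :=
  ⟨(hf.1.and hg.1).mono fun _ hy => hy.1.sub hy.2,
    (hf.2.sub hg.2).congr_of_eventuallyEq (hf.fderiv_sub hg)⟩

theorem fderiv_fderiv_nonpos_of_isLocalMax (hf : TwiceDifferentiableAt f x)
    (hmax : IsLocalMax f x) (v : E) : fderiv ℝ (fderiv ℝ f) x v v ≤ 0 := by
  have hline : Tendsto (fun t : ℝ => x + t • v) (𝓝 0) (𝓝 x) :=
    Continuous.tendsto' (by fun_prop) _ _ (by simp)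
  have hpath : ∀ t : ℝ, HasDerivAt (fun t : ℝ => x + t • v) v t := fun t => by
    simpa using ((hasDerivAt_id t).smul_const v).const_add x
  have hderiv : deriv (fun t : ℝ => f (x + t • v)) =ᶠ[𝓝 0] fun t => fderiv ℝ f (x + t • v) v := by
    filter_upwards [hline.eventually hf.1] with t ht
    exact (ht.hasFDerivAt.comp_hasDerivAt t (hpath t)).deriv
  have hderiv₂ : HasDerivAt (fun t : ℝ => fderiv ℝ f (x + t • v) v)
      (fderiv ℝ (fderiv ℝ f) x v v) 0 := by
    have hx : HasFDerivAt (fderiv ℝ f) (fderiv ℝ (fderiv ℝ f) x) (x + (0 : ℝ) • v) := by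
      simpa using hf.2.hasFDerivAt
    exact (ContinuousLinearMap.apply ℝ ℝ v).hasFDerivAt.comp_hasDerivAt 0
      (hx.comp_hasDerivAt 0 (hpath 0))
  have hmax_line : IsLocalMax (fun t : ℝ => f (x + t • v)) 0 := by
    filter_upwards [hline.eventually hmax] with t ht
    simpa using ht
  have hcont : ContinuousAt (fun t : ℝ => f (x + t • v)) 0 :=
    ContinuousAt.comp (by simpa using hf.continuousAt) (hpath 0).continuousAt
  simpa only [hderiv.deriv_eq, hderiv₂.deriv] using
    deriv_deriv_nonpos_of_isLocalMax hmax_line hcont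

/-- The quadratic function with constant term `a`, linear part `L` and quadratic part `B`; the
bilinear form `B` need not be symmetric. -/
def quadFun (a : ℝ) (L : E →L[ℝ] ℝ) (B : E →L[ℝ] E →L[ℝ] ℝ) (x : E) : ℝ :=
  a + L x + B x x

variable (a : ℝ) (L : E →L[ℝ] ℝ) (B : E →L[ℝ] E →L[ℝ] ℝ)

theorem hasFDerivAt_quadFun (x : E) :
    HasFDerivAt (quadFun a L B) (L + (B + B.flip) x) x := by
  have hB := B.hasFDerivAt_of_bilinear (hasFDerivAt_id x) (hasFDerivAt_id x)
  refine ((L.hasFDerivAt.const_add a).add hB).congr_fderiv ?_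
  ext v
  simp

theorem fderiv_quadFun : fderiv ℝ (quadFun a L B) = fun x => L + (B + B.flip) x :=
  funext fun x => (hasFDerivAt_quadFun a L B x).fderiv

theorem fderiv_fderiv_quadFun (x : E) : fderiv ℝ (fderiv ℝ (quadFun a L B)) x = B + B.flip := by
  rw [fderiv_quadFun, fderiv_const_add, ContinuousLinearMap.fderiv]

theorem continuous_quadFun : Continuous (quadFun a L B) := by
  unfold quadFun
  fun_prop

theorem twiceDifferentiableAt_quadFun (x : E) : TwiceDifferentiableAt (quadFun a L B) x := by
  refine ⟨Eventually.of_forall fun y => (hasFDerivAt_quadFun a L B y).differentiableAt, ?_⟩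
  rw [fderiv_quadFun]
  fun_prop

end SecondOrder

section Laplacian

variable {m : ℕ} {f g : En m → ℝ} {x : En m}

theorem lapAt_congr (hfg : f =ᶠ[𝓝 x] g) : lapAt f x = lapAt g x := by
  simp only [lapAt, hfg.fderiv.fderiv_eq]

theorem lapAt_neg (f : En m → ℝ) (x : En m) : lapAt (fun y => -f y) x = -lapAt f x := by
  have hfderiv : fderiv ℝ (fun y => -f y) = fun y => -fderiv ℝ f y := funext fun _ => fderiv_fun_neg
  simp only [lapAt, hfderiv, fderiv_fun_neg, neg_apply, Finset.sum_neg_distrib]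

theorem lapAt_sub (hf : TwiceDifferentiableAt f x) (hg : TwiceDifferentiableAt g x) :
    lapAt (fun y => f y - g y) x = lapAt f x - lapAt g x := by
  simp only [lapAt, (hf.fderiv_sub hg).fderiv_eq, fderiv_fun_sub hf.2 hg.2,
    sub_apply, Finset.sum_sub_distrib]

theorem lapAt_le_lapAt_of_isLocalMax_sub (hf : TwiceDifferentiableAt f x)
    (hg : TwiceDifferentiableAt g x) (hmax : IsLocalMax (fun y => f y - g y) x) :
    lapAt f x ≤ lapAt g x := by
  rw [← sub_nonpos, ← lapAt_sub hf hg]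
  exact Finset.sum_nonpos fun i _ => fderiv_fderiv_nonpos_of_isLocalMax (hf.sub hg) hmax _

theorem lapAt_quadFun (a : ℝ) (L : En m →L[ℝ] ℝ) (B : En m →L[ℝ] En m →L[ℝ] ℝ) (x : En m) :
    lapAt (quadFun a L B) x =
      2 * ∑ i, B (EuclideanSpace.single i 1) (EuclideanSpace.single i 1) := by
  simp only [lapAt, fderiv_fderiv_quadFun, add_apply,
    ContinuousLinearMap.flip_apply, ← two_mul, Finset.mul_sum]

end Laplacian

section Scaling

theorem exists_mem_frontier_of_isPreconnected {X : Type*} [TopologicalSpace X] {s Ω : Set X}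
    (hs : IsPreconnected s) (hΩ : IsOpen Ω) {a b : X} (ha : a ∈ s) (haΩ : a ∈ Ω) (hb : b ∈ s)
    (hbΩ : b ∉ Ω) : ∃ z ∈ s, z ∈ frontier Ω := by
  by_contra! hfr
  refine hbΩ (hs.subset_left_of_subset_union hΩ isClosed_closure.isOpen_compl
    (disjoint_compl_right.mono_left subset_closure) (fun z hz => ?_) ⟨a, ha, haΩ⟩ hb)
  by_contra! hz'
  rw [mem_union, not_or, notMem_compl_iff] at hz'
  exact hfr z hz (hΩ.frontier_eq ▸ ⟨hz'.2, hz'.1⟩)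

theorem exists_isLocalMax_mem_ball {X : Type*} [PseudoMetricSpace X] [ProperSpace X] {g : X → ℝ}
    {q : X} {R : ℝ} (hR : 0 < R) (hg : ContinuousOn g (closedBall q R))
    (hsphere : ∀ x ∈ sphere q R, g x < g q) : ∃ x ∈ ball q R, IsLocalMax g x := by
  rw [← closedBall_sdiff_ball] at hsphere
  exact (isCompact_closedBall q R).exists_isLocalMax_mem_open ball_subset_closedBall hg
    (mem_closedBall_self hR.le) hsphere isOpen_ball

theorem isLittleO_mul_norm_rpow_add {E : Type*} [SeminormedAddCommGroup E] (K : ℝ) (k : ℕ)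
    {α : ℝ} (hα : 0 < α) :
    (fun x : E => K * ‖x‖ ^ ((k : ℝ) + α)) =o[𝓝 0] fun x => ‖x‖ ^ k := by
  have hzero : (fun x : E => ‖x‖ ^ α) =o[𝓝 0] fun _ => (1 : ℝ) :=
    (isLittleO_one_iff ℝ).2 <| Continuous.tendsto'
      (continuous_norm.rpow_const fun _ => Or.inr hα.le) _ _ (by simp [hα.ne'])
  refine IsLittleO.const_mul_left (IsLittleO.congr ((isBigO_refl _ _).mul_isLittleO hzero)
    (fun x => ?_) fun x => mul_one (‖x‖ ^ k)) K
  rw [Real.rpow_add_of_nonneg (norm_nonneg x) k.cast_nonneg hα.le, Real.rpow_natCast]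

variable {E : Type*} [NormedAddCommGroup E] [NormedSpace ℝ E]

theorem norm_le_of_mem_closedBall_smul {p x : E} {r ρ : ℝ} (hr : 0 ≤ r)
    (hx : x ∈ closedBall (r • p) (r * ρ)) : ‖x‖ ≤ r * (‖p‖ + ρ) := by
  calc ‖x‖ ≤ ‖r • p‖ + ‖x - r • p‖ := norm_le_insert' x (r • p)
    _ ≤ r * ‖p‖ + r * ρ := by
        rw [norm_smul, Real.norm_of_nonneg hr]
        gcongr
        exact mem_closedBall_iff_norm.1 hx
    _ = r * (‖p‖ + ρ) := by ring

theorem eventually_forall_mem_closedBall_smul {P : E → Prop} (hP : ∀ᶠ x in 𝓝 0, P x) (p : E)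
    (ρ : ℝ) : ∀ᶠ r : ℝ in 𝓝[>] 0, ∀ x ∈ closedBall (r • p) (r * ρ), P x := by
  obtain ⟨ε, hε, hεP⟩ := Metric.eventually_nhds_iff_ball.1 hP
  have hsmall : ∀ᶠ r : ℝ in 𝓝[>] 0, r * (‖p‖ + ρ) < ε :=
    ((continuous_mul_const _).tendsto' _ _ (zero_mul _)).mono_left nhdsWithin_le_nhds
      |>.eventually_lt_const hε
  filter_upwards [hsmall, self_mem_nhdsWithin] with r hr hr0 x hx
  exact hεP x (mem_ball_zero_iff.2
    ((norm_le_of_mem_closedBall_smul (mem_Ioi.1 hr0).le hx).trans_lt hr))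

theorem exists_eq_mul_of_forall_ker_eq_zero {ℓ : E →L[ℝ] ℝ} {B : E →L[ℝ] E →L[ℝ] ℝ} {e : E}
    (he : ℓ e = 1) (hB : ∀ x, ℓ x = 0 → B x x = 0) :
    ∃ M : E →L[ℝ] ℝ, ∀ x, B x x = ℓ x * M x := by
  refine ⟨B e + B.flip e - B e e • ℓ, fun x => ?_⟩
  have hker : B (x - ℓ x • e) (x - ℓ x • e) = 0 := hB _ (by simp [he])
  simp only [map_sub, map_smul, sub_apply, smul_apply, smul_eq_mul] at hker
  simp only [sub_apply, add_apply, smul_apply, smul_eq_mul, ContinuousLinearMap.flip_apply]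
  linear_combination hker

theorem apply_self_eq_zero_of_mem_tangentConeAt {S : Set E} {B : E →L[ℝ] E →L[ℝ] ℝ}
    (hB : (fun z => B z z) =o[𝓝[S] 0] fun z => ‖z‖ ^ 2) {p : E} (hp : p ∈ tangentConeAt ℝ S 0) :
    B p p = 0 := by
  obtain ⟨ι, l, _, c, d, hd₀, hdS, hcd⟩ := exists_fun_of_mem_tangentConeAt hp
  simp only [zero_add] at hdS
  have hscaled : (fun i => B (c i • d i) (c i • d i)) =o[l] fun i => ‖c i • d i‖ ^ 2 := by
    refine ((isBigO_refl (fun i => c i ^ 2) l).mul_isLittleO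
      (hB.comp_tendsto (tendsto_nhdsWithin_iff.2 ⟨hd₀, hdS⟩))).congr (fun i => ?_) fun i => ?_
    · simp only [Function.comp_apply, map_smul, smul_apply, smul_eq_mul]
      ring
    · simp only [Function.comp_apply, norm_smul, Real.norm_eq_abs, mul_pow, sq_abs]
  have hzero : Tendsto (fun i => B (c i • d i) (c i • d i)) l (𝓝 0) :=
    hscaled.trans_isBigO ((hcd.norm.pow 2).isBigO_one ℝ) |> (isLittleO_one_iff ℝ).1
  have hlim : Tendsto (fun i => B (c i • d i) (c i • d i)) l (𝓝 (B p p)) :=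
    ((Continuous.tendsto (f := fun y => B y y) (by fun_prop) p)).comp hcd
  exact tendsto_nhds_unique hlim hzero

theorem eventually_forall_closedBall_smul_abs_le {f : E → ℝ}
    (hf : f =o[𝓝 0] fun x => ‖x‖ ^ 2) (p : E) {ρ c : ℝ} (hρ : 0 < ρ) (hc : 0 < c) :
    ∀ᶠ r : ℝ in 𝓝[>] 0, ∀ x ∈ closedBall (r • p) (r * ρ), |f x| ≤ r ^ 2 * c := by
  have hη : 0 < c / (‖p‖ + ρ) ^ 2 := by positivity
  filter_upwards [self_mem_nhdsWithin,
    eventually_forall_mem_closedBall_smul (isLittleO_iff.1 hf hη) p ρ] with r hr hball x hx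
  calc |f x| ≤ c / (‖p‖ + ρ) ^ 2 * ‖x‖ ^ 2 := by simpa using hball x hx
    _ ≤ c / (‖p‖ + ρ) ^ 2 * (r * (‖p‖ + ρ)) ^ 2 := by
        gcongr
        exact norm_le_of_mem_closedBall_smul (mem_Ioi.1 hr).le hx
    _ = r ^ 2 * c := by field_simp

end Scaling

section Polynomial

variable {m : ℕ}

theorem exists_quadFun_eq_peval_monomial {d : Fin m →₀ ℕ} (hd : d.toMultiset.card ≤ 2) (c : ℝ) :
    ∃ a L B, peval (monomial d c) = quadFun (E := En m) a L B := by
  have heval : ∀ x : En m,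
      peval (monomial d c) x = c * (d.toMultiset.map fun i => x i).prod := fun x => by
    rw [peval, eval_monomial, Finsupp.toMultiset_map, Finsupp.prod_toMultiset,
      Finsupp.prod_mapDomain_index (by simp) (by intros; ring)]
  interval_cases hcard : d.toMultiset.card
  · rw [Multiset.card_eq_zero] at hcard
    exact ⟨c, 0, 0, funext fun x => by simp [heval, hcard, quadFun]⟩
  · obtain ⟨i, hi⟩ := Multiset.card_eq_one.1 hcard
    exact ⟨0, c • EuclideanSpace.proj i, 0, funext fun x => by simp [heval, hi, quadFun]⟩
  · obtain ⟨i, j, hij⟩ := Multiset.card_eq_two.1 hcard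
    exact ⟨0, 0, c • (EuclideanSpace.proj i : En m →L[ℝ] ℝ).smulRight
      (EuclideanSpace.proj j : En m →L[ℝ] ℝ), funext fun x => by simp [heval, hij, quadFun]⟩

theorem exists_quadFun_eq_peval {P : MvPolynomial (Fin m) ℝ} (hP : P.totalDegree ≤ 2) :
    ∃ a L B, peval P = quadFun (E := En m) a L B := by
  rw [P.as_sum]
  refine Finset.sum_induction _ (fun Q => ∃ a L B, peval Q = quadFun (E := En m) a L B) ?_ ?_ ?_
  · rintro Q R ⟨a, L, B, hQ⟩ ⟨a', L', B', hR⟩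
    refine ⟨a + a', L + L', B + B', funext fun x => ?_⟩
    have hadd : peval (Q + R) x = peval Q x + peval R x := map_add (MvPolynomial.eval _) Q R
    simp only [hadd, hQ, hR, quadFun, add_apply]
    ring
  · exact ⟨0, 0, 0, funext fun x => by simp [peval, quadFun]⟩
  · intro d hd
    refine exists_quadFun_eq_peval_monomial ?_ _
    rw [Finsupp.card_toMultiset]
    exact (le_totalDegree hd).trans hP

end Polynomial

section Coordinates

/-- The last coordinate `xn` as a continuous linear functional. -/
def xnCLM (n : ℕ) [NeZero n] : En n →L[ℝ] ℝ := EuclideanSpace.proj (lastIdx n)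

/-- The unit vector `e_n` in the direction of the last coordinate. -/
def lastBasisVec (n : ℕ) [NeZero n] : En n := EuclideanSpace.single (lastIdx n) 1

theorem xnCLM_apply (x : En n) : xnCLM n x = xn x := rfl

theorem xn_add (x y : En n) : xn (x + y) = xn x + xn y := map_add (xnCLM n) x y

theorem xn_smul (r : ℝ) (x : En n) : xn (r • x) = r * xn x := map_smul (xnCLM n) r x

theorem xn_lastBasisVec : xn (lastBasisVec n) = 1 := by simp [xn, lastBasisVec]

theorem norm_lastBasisVec : ‖lastBasisVec n‖ = 1 := by simp [lastBasisVec]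

theorem abs_xn_le_norm (x : En n) : |xn x| ≤ ‖x‖ := PiLp.norm_apply_le x (lastIdx n)

theorem xpn_le_norm (x : En n) : xpn x ≤ ‖x‖ := by
  simp only [xpn, EuclideanSpace.norm_eq, Real.norm_eq_abs, sq_abs]
  exact Real.sqrt_le_sqrt
    (Finset.sum_le_sum_of_subset_of_nonneg (Finset.erase_subset _ _) fun i _ _ => sq_nonneg (x i))

theorem abs_xn_sub_smul_le {p x : En n} {r ρ : ℝ} (hx : x ∈ closedBall (r • p) (r * ρ)) :
    |xn x - r * xn p| ≤ r * ρ :=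
  (abs_xn_le_norm (x - r • p)).trans (mem_closedBall_iff_norm.1 hx)

/-- The Euclidean inner product as a continuous bilinear form; `innerSL ℝ` itself carries the type
of a map that is conjugate-linear in its first argument. -/
def innerBilin (m : ℕ) : En m →L[ℝ] En m →L[ℝ] ℝ := innerSL ℝ

theorem innerBilin_apply {m : ℕ} (x y : En m) : innerBilin m x y = inner ℝ x y := rfl

/-- The paraboloid with slope `A` and curvature `b` in the last variable and isotropic curvature
`D` centred at `q`; the comparison function of the maximum principle arguments. -/
def paraboloid (A b D : ℝ) (q x : En n) : ℝ := A * xn x + b * xn x ^ 2 + D * ‖x - q‖ ^ 2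

variable (A b D : ℝ) (q x : En n)

theorem paraboloid_eq_quadFun :
    paraboloid A b D q = quadFun (D * ‖q‖ ^ 2) (A • xnCLM n - (2 * D) • innerBilin n q)
      (b • (xnCLM n).smulRight (xnCLM n) + D • innerBilin n) := by
  funext x
  simp only [paraboloid, quadFun, sub_apply, add_apply, smul_apply, smul_eq_mul, xnCLM_apply,
    ContinuousLinearMap.smulRight_apply, innerBilin_apply, norm_sub_sq_real,
    real_inner_self_eq_norm_sq, real_inner_comm x q]
  ring

theorem continuous_paraboloid : Continuous (paraboloid A b D q) := by
  rw [paraboloid_eq_quadFun]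
  exact continuous_quadFun _ _ _

theorem twiceDifferentiableAt_paraboloid : TwiceDifferentiableAt (paraboloid A b D q) x := by
  rw [paraboloid_eq_quadFun]
  exact twiceDifferentiableAt_quadFun _ _ _ x

theorem lapAt_paraboloid : lapAt (paraboloid A b D q) x = 2 * b + 2 * n * D := by
  have hxn : ∀ i, xn (EuclideanSpace.single i 1 : En n) = if i = lastIdx n then 1 else 0 :=
    fun i => by simp only [xn, PiLp.single_apply, eq_comm]
  rw [paraboloid_eq_quadFun, lapAt_quadFun]
  simp only [add_apply, smul_apply, ContinuousLinearMap.smulRight_apply, xnCLM_apply, hxn,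
    smul_eq_mul, mul_ite, mul_one, mul_zero, innerBilin_apply, real_inner_self_eq_norm_sq,
    PiLp.norm_single, norm_one, one_pow, Finset.sum_add_distrib, Finset.sum_ite_eq',
    Finset.sum_const, Finset.card_univ, Fintype.card_fin, nsmul_eq_mul,
    Finset.mem_univ, if_true]
  ring

theorem fderiv_paraboloid_lastBasisVec :
    fderiv ℝ (paraboloid A b D q) x (lastBasisVec n) =
      A + 2 * b * xn x + 2 * D * (xn x - xn q) := by
  have hinner : ∀ y : En n, inner ℝ y (lastBasisVec n) = xn y := fun y => by
    simp [lastBasisVec, xn, EuclideanSpace.inner_single_right]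
  rw [paraboloid_eq_quadFun, fderiv_quadFun]
  simp only [sub_apply, add_apply, smul_apply, smul_eq_mul, xnCLM_apply,
    ContinuousLinearMap.flip_apply, ContinuousLinearMap.smulRight_apply, innerBilin_apply,
    hinner, real_inner_comm, xn_lastBasisVec]
  ring

end Coordinates

section Flatness

/-- First-order flatness of `Ω` at `0` with inner normal `e_n`: the blow-ups `r⁻¹ • Ω` tend to the
half-space `{x_n > 0}` away from every cone around the hyperplane `{x_n = 0}`. -/
def TangentHalfSpace (Ω : Set (En n)) : Prop :=
  ∀ δ > 0, ∀ᶠ x in 𝓝 0, (δ * ‖x‖ < xn x → x ∈ Ω) ∧ (xn x < -(δ * ‖x‖) → x ∉ Ω)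

theorem Domain1α.tangentHalfSpace {Ω : Set (En n)} {α K : ℝ} (hΩ : Domain1α α K Ω) (hα : 0 < α)
    (hK : 0 ≤ K) : TangentHalfSpace Ω := by
  intro δ hδ
  filter_upwards [ball_mem_nhds 0 one_pos,
    (isLittleO_iff.1 (isLittleO_mul_norm_rpow_add (E := En n) K 1 hα)) hδ] with x hx hsmall
  have hxpn : K * xpn x ^ (1 + α) ≤ δ * ‖x‖ := calc
    K * xpn x ^ (1 + α) ≤ K * ‖x‖ ^ (1 + α) := by
      gcongr
      · exact Real.sqrt_nonneg _
      · exact xpn_le_norm x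
    _ ≤ δ * ‖x‖ := by simpa using (le_abs_self _).trans hsmall
  rw [mem_ball_zero_iff] at hx
  exact ⟨fun h => hΩ.1 x hx (hxpn.trans_lt h),
    fun h => hΩ.2 x hx (h.trans_le (neg_le_neg hxpn))⟩

namespace TangentHalfSpace

variable {Ω : Set (En n)}

theorem eventually_forall_mem_closedBall (hΩ : TangentHalfSpace Ω) {P : En n → Prop}
    (hP : ∀ᶠ x in 𝓝[Ω] 0, P x) {p : En n} {ρ : ℝ} (hρ : 0 ≤ ρ) (hp : ρ < xn p) :
    ∀ᶠ r : ℝ in 𝓝[>] 0, ∀ x ∈ closedBall (r • p) (r * ρ), x ∈ Ω ∧ P x := by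
  have hδ : 0 < (xn p - ρ) / (‖p‖ + ρ + 1) := div_pos (sub_pos.2 hp) (by positivity)
  filter_upwards [self_mem_nhdsWithin, eventually_forall_mem_closedBall_smul
    ((hΩ _ hδ).and (eventually_nhdsWithin_iff.1 hP)) p ρ] with r hr hball x hx
  rw [mem_Ioi] at hr
  suffices hcone : (xn p - ρ) / (‖p‖ + ρ + 1) * ‖x‖ < xn x by
    have hxΩ := (hball x hx).1.1 hcone
    exact ⟨hxΩ, (hball x hx).2 hxΩ⟩
  calc (xn p - ρ) / (‖p‖ + ρ + 1) * ‖x‖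
      ≤ (xn p - ρ) / (‖p‖ + ρ + 1) * (r * (‖p‖ + ρ)) := by
        gcongr
        exact norm_le_of_mem_closedBall_smul hr.le hx
    _ < (xn p - ρ) / (‖p‖ + ρ + 1) * (r * (‖p‖ + ρ + 1)) := by
        gcongr (xn p - ρ) / (‖p‖ + ρ + 1) * (r * ?_)
        exact lt_add_one _
    _ = r * xn p - r * ρ := by field_simp
    _ ≤ xn x := by linarith [(abs_le.1 (abs_xn_sub_smul_le hx)).1]

theorem eventually_smul_mem (hΩ : TangentHalfSpace Ω) {p : En n} (hp : 0 < xn p) :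
    ∀ᶠ r : ℝ in 𝓝[>] 0, r • p ∈ Ω := by
  filter_upwards [hΩ.eventually_forall_mem_closedBall (P := fun _ => True)
    (Eventually.of_forall fun _ => trivial) le_rfl hp] with r hr
  exact (hr (r • p) (by simp)).1

theorem eventually_smul_notMem (hΩ : TangentHalfSpace Ω) {p : En n} (hp : xn p < 0) :
    ∀ᶠ r : ℝ in 𝓝[>] 0, r • p ∉ Ω := by
  have hδ : 0 < -xn p / (‖p‖ + 1) := div_pos (neg_pos.2 hp) (by positivity)
  filter_upwards [self_mem_nhdsWithin,
    eventually_forall_mem_closedBall_smul (hΩ _ hδ) p 0] with r hr hball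
  rw [mem_Ioi] at hr
  refine (hball (r • p) (by simp)).2 ?_
  have hcone : -xn p / (‖p‖ + 1) * ‖p‖ < -xn p := by
    rw [div_mul_eq_mul_div, div_lt_iff₀ (by positivity)]
    nlinarith
  calc xn (r • p) = -(r * -xn p) := by rw [xn_smul]; ring
    _ < -(r * (-xn p / (‖p‖ + 1) * ‖p‖)) := by gcongr
    _ = -(-xn p / (‖p‖ + 1) * ‖r • p‖) := by rw [norm_smul, Real.norm_of_nonneg hr.le]; ring

theorem uniqueDiffWithinAt (hΩ : TangentHalfSpace Ω) : UniqueDiffWithinAt ℝ Ω 0 := by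
  let cone : Set (En n) := {x | (1 / 2 : ℝ) * ‖x‖ - xnCLM n x < 0}
  have hconvex : Convex ℝ cone := by
    have hfun : ConvexOn ℝ univ fun x : En n => (1 / 2 : ℝ) * ‖x‖ - xnCLM n x :=
      ((convexOn_norm convex_univ).smul (by norm_num : (0 : ℝ) ≤ 1 / 2)).sub
        ((xnCLM n : En n →ₗ[ℝ] ℝ).concaveOn convex_univ)
    simpa [cone] using hfun.convex_lt 0
  have hopen : IsOpen cone := isOpen_lt (by fun_prop) continuous_const
  have hray : ∀ r : ℝ, 0 < r → r • lastBasisVec n ∈ cone := fun r hr => by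
    simp only [cone, mem_ofPred_eq, xnCLM_apply, xn_smul, xn_lastBasisVec, norm_smul,
      norm_lastBasisVec, Real.norm_of_nonneg hr.le]
    linarith
  have hzero : (0 : En n) ∈ closure cone := by
    refine mem_closure_of_tendsto (f := fun r : ℝ => r • lastBasisVec n) (b := 𝓝[>] 0)
      (((continuous_id.smul continuous_const).tendsto' _ _ (zero_smul ℝ _)).mono_left
        nhdsWithin_le_nhds) ?_
    filter_upwards [self_mem_nhdsWithin] with r hr using hray r hr
  refine (uniqueDiffWithinAt_convex hconvex (hopen.interior_eq.symm ▸ ⟨_, hray 1 one_pos⟩)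
    hzero).mono_nhds (le_inf nhdsWithin_le_nhds (le_principal_iff.2 ?_))
  filter_upwards [nhdsWithin_le_nhds (hΩ (1 / 2) (by norm_num)), self_mem_nhdsWithin] with x hx hxc
  exact hx.1 (sub_neg.1 hxc)

theorem zero_notMem (hΩ : TangentHalfSpace Ω) (hΩo : IsOpen Ω) : (0 : En n) ∉ Ω := by
  intro hzero
  have hlim : Tendsto (fun r : ℝ => r • -lastBasisVec n) (𝓝[>] 0) (𝓝 0) :=
    ((continuous_id.smul continuous_const).tendsto' _ _ (zero_smul ℝ _)).mono_left
      nhdsWithin_le_nhds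
  have hxn : xn (-lastBasisVec n) < 0 := by
    rw [← neg_one_smul ℝ, xn_smul, xn_lastBasisVec]
    norm_num
  obtain ⟨r, hr, hr'⟩ :=
    ((hlim.eventually (hΩo.mem_nhds hzero)).and (hΩ.eventually_smul_notMem hxn)).exists
  exact hr' hr

theorem eventually_exists_mem_frontier (hΩ : TangentHalfSpace Ω) (hΩo : IsOpen Ω) {p : En n}
    (hp : xn p = 0) {ε : ℝ} (hε : 0 < ε) :
    ∀ᶠ r : ℝ in 𝓝[>] 0, ∃ z ∈ closedBall (r • p) (r * ε), z ∈ frontier Ω := by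
  have hxn : ∀ s : ℝ, xn (p + s • lastBasisVec n) = s := fun s => by
    rw [xn_add, xn_smul, hp, xn_lastBasisVec, zero_add, mul_one]
  filter_upwards [self_mem_nhdsWithin,
    hΩ.eventually_smul_mem (p := p + ε • lastBasisVec n) (by rwa [hxn]),
    hΩ.eventually_smul_notMem (p := p + (-ε) • lastBasisVec n) (by rw [hxn]; linarith)]
    with r hr hin hout
  rw [mem_Ioi] at hr
  have hmem : ∀ s : ℝ, |s| = ε → r • (p + s • lastBasisVec n) ∈ closedBall (r • p) (r * ε) :=
    fun s hs => by
      rw [mem_closedBall_iff_norm, smul_add, add_sub_cancel_left, norm_smul, norm_smul,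
        norm_lastBasisVec, mul_one, Real.norm_of_nonneg hr.le, Real.norm_eq_abs, hs]
  exact exists_mem_frontier_of_isPreconnected (convex_closedBall (r • p) (r * ε)).isPreconnected
    hΩo (hmem ε (abs_of_pos hε)) hin (hmem (-ε) (by rw [abs_neg, abs_of_pos hε])) hout

theorem mem_tangentConeAt_frontier (hΩ : TangentHalfSpace Ω) (hΩo : IsOpen Ω) {p : En n}
    (hp : xn p = 0) : p ∈ tangentConeAt ℝ (frontier Ω) 0 := by
  rw [tangentConeAt_eq_biInter_closure, mem_iInter₂]
  refine fun U hU => Metric.mem_closure_iff.2 fun ε hε => ?_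
  obtain ⟨r, hrU, ⟨z, hzball, hzfr⟩, hr⟩ :=
    ((eventually_forall_mem_closedBall_smul hU p (ε / 2)).and
      ((hΩ.eventually_exists_mem_frontier hΩo hp (half_pos hε)).and self_mem_nhdsWithin)).exists
  refine ⟨r⁻¹ • z, smul_mem_smul (mem_univ _) ⟨hrU z hzball, by simpa using hzfr⟩, ?_⟩
  calc dist p (r⁻¹ • z) = r⁻¹ * dist z (r • p) := by
        rw [dist_comm, ← abs_of_pos (inv_pos.2 hr), ← Real.norm_eq_abs, ← dist_smul₀,
          Real.norm_of_nonneg (inv_pos.2 hr).le, inv_smul_smul₀ hr.ne']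
    _ ≤ r⁻¹ * (r * (ε / 2)) := by gcongr; exact hzball
    _ < ε := by rw [inv_mul_cancel_left₀ hr.ne']; exact half_lt_self hε

end TangentHalfSpace

end Flatness

section TaylorPolynomial

theorem isLittleO_nhdsWithin_frontier {X : Type*} [TopologicalSpace X] {Ω : Set X} {x₀ : X}
    {u f g : X → ℝ} (hf : Continuous f) (hg : Continuous g)
    (hexp : (fun x => u x - f x) =o[𝓝[Ω] x₀] g)
    (hu : ∀ᶠ z in 𝓝[frontier Ω] x₀, Tendsto u (𝓝[Ω] z) (𝓝 0)) : f =o[𝓝[frontier Ω] x₀] g := by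
  refine isLittleO_iff.2 fun c hc => ?_
  have hnear := (eventually_nhdsWithin_iff.1 (isLittleO_iff.1 hexp hc)).eventually_nhds
  filter_upwards [hu, nhdsWithin_le_nhds hnear, self_mem_nhdsWithin] with z huz hz hzfr
  have : (𝓝[Ω] z).NeBot := mem_closure_iff_nhdsWithin_neBot.1 (frontier_subset_closure hzfr)
  have hlim : Tendsto (fun x => ‖u x - f x‖) (𝓝[Ω] z) (𝓝 ‖0 - f z‖) :=
    (huz.sub (hf.continuousAt.mono_left nhdsWithin_le_nhds)).norm
  rw [zero_sub, norm_neg] at hlim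
  exact le_of_tendsto_of_tendsto hlim
    ((hg.norm.const_mul c).continuousAt.mono_left nhdsWithin_le_nhds)
    (eventually_nhdsWithin_iff.2 hz)

theorem quadFun_lower_order_eq_zero {E : Type*} [NormedAddCommGroup E] [NormedSpace ℝ E]
    {Ω : Set E} {w : E → ℝ} {a : ℝ} {L : E →L[ℝ] ℝ} {B : E →L[ℝ] E →L[ℝ] ℝ}
    (hΩ : UniqueDiffWithinAt ℝ Ω 0) (hw : HasFDerivAt w (0 : E →L[ℝ] ℝ) 0) (hw₀ : w 0 = 0)
    (hexp : (fun x => w x - quadFun a L B x) =o[𝓝[Ω] 0] fun x => ‖x‖ ^ 2) : a = 0 ∧ L = 0 := by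
  have hwo : w =o[𝓝[Ω] 0] fun x => x := by
    simpa [hw₀] using hw.isLittleO.mono nhdsWithin_le_nhds
  have hquad : quadFun a L B =o[𝓝[Ω] 0] fun x => x := by
    have hsq : (fun x : E => ‖x‖ ^ 2) =o[𝓝[Ω] 0] fun x => x :=
      (isLittleO_norm_pow_id one_lt_two).mono nhdsWithin_le_nhds
    simpa using hwo.sub (hexp.trans hsq)
  have ha : a = 0 := by
    have : (𝓝[Ω] (0 : E)).NeBot := mem_closure_iff_nhdsWithin_neBot.1 hΩ.mem_closure
    refine tendsto_nhds_unique (((continuous_quadFun a L B).tendsto' 0 a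
      (by simp [quadFun])).mono_left nhdsWithin_le_nhds) (hquad.trans_tendsto ?_)
    exact tendsto_id.mono_left nhdsWithin_le_nhds
  refine ⟨ha, ?_⟩
  have hL : HasFDerivWithinAt (quadFun a L B) L Ω 0 := by
    simpa using (hasFDerivAt_quadFun a L B 0).hasFDerivWithinAt
  have hzero : HasFDerivWithinAt (quadFun a L B) (0 : E →L[ℝ] ℝ) Ω 0 :=
    .of_isLittleO (hquad.congr (fun x => by simp [quadFun, ha]) fun x => (sub_zero x).symm)
  exact hΩ.eq hL hzero

theorem TangentHalfSpace.isLittleO_indicator_sub_max_mul {Ω : Set (En n)}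
    (hΩ : TangentHalfSpace Ω) {u : En n → ℝ} {M : En n →L[ℝ] ℝ}
    (hexp : (fun x => u x - xn x * M x) =o[𝓝[Ω] 0] fun x => ‖x‖ ^ 2) :
    (fun x => Ω.indicator u x - max (xn x) 0 * M x) =o[𝓝 0] fun x => ‖x‖ ^ 2 := by
  refine isLittleO_iff.2 fun c hc => ?_
  have hδ : 0 < c / (2 * (‖M‖ + 1)) := by positivity
  have hcone : ∀ {t : ℝ} {x : En n}, |t| ≤ c / (2 * (‖M‖ + 1)) * ‖x‖ →
      |t * M x| ≤ c / 2 * ‖x‖ ^ 2 := fun {t x} ht => calc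
    |t * M x| ≤ c / (2 * (‖M‖ + 1)) * ‖x‖ * ((‖M‖ + 1) * ‖x‖) := by
      rw [abs_mul]
      gcongr
      exact (M.le_opNorm x).trans (by gcongr; exact (lt_add_one _).le)
    _ = c / 2 * ‖x‖ ^ 2 := by field_simp
  filter_upwards [eventually_nhdsWithin_iff.1 (isLittleO_iff.1 hexp (half_pos hc)), hΩ _ hδ]
    with x hux hflat
  rw [norm_pow, norm_norm, Real.norm_eq_abs] at *
  by_cases hx : x ∈ Ω
  · have hxn : |min (xn x) 0| ≤ c / (2 * (‖M‖ + 1)) * ‖x‖ := by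
      rw [abs_of_nonpos (min_le_right _ _), neg_le, le_min_iff]
      exact ⟨not_lt.1 fun h => hflat.2 h hx, neg_nonpos.2 (by positivity)⟩
    have hsplit : Ω.indicator u x - max (xn x) 0 * M x
        = (u x - xn x * M x) + min (xn x) 0 * M x := by
      rw [indicator_of_mem hx]
      linear_combination -M x * min_add_max (xn x) 0
    rw [hsplit]
    linarith [abs_add_le (u x - xn x * M x) (min (xn x) 0 * M x), hux hx, hcone hxn]
  · have hxn : |max (xn x) 0| ≤ c / (2 * (‖M‖ + 1)) * ‖x‖ := by
      rw [abs_of_nonneg (le_max_right _ _), max_le_iff]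
      exact ⟨not_lt.1 fun h => hx (hflat.1 h), by positivity⟩
    rw [indicator_of_notMem hx, zero_sub, abs_neg]
    linarith [hcone hxn, mul_nonneg hc.le (sq_nonneg ‖x‖)]

end TaylorPolynomial

section MaximumPrinciple

theorem max_mul_add_mul_add_mul_sq_nonpos {t s a N : ℝ} (ha : a ≤ -(3 / 4) * s) (hN : 0 ≤ N)
    (ht : N * |t| ≤ s / 4) : max t 0 * a + s / 2 * t + N * t ^ 2 ≤ 0 := by
  have hs : 0 ≤ s := by linarith [mul_nonneg hN (abs_nonneg t)]
  rcases le_total 0 t with h | h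
  · rw [max_eq_left h]
    rw [abs_of_nonneg h] at ht
    nlinarith [mul_le_mul_of_nonneg_left ha h, mul_le_mul_of_nonneg_left ht h]
  · rw [max_eq_right h]
    rw [abs_of_nonpos h] at ht
    nlinarith [mul_le_mul_of_nonneg_left ht (neg_nonneg.2 h), mul_nonneg hs (neg_nonneg.2 h)]

variable {Ω : Set (En n)}

theorem sub_paraboloid_lt_of_mem_sphere {w : En n → ℝ} {M : En n →L[ℝ] ℝ} {p x : En n}
    {κ N ρ r : ℝ} (hr : 0 < r) (hρ : 0 < ρ) (hp : xn p = 0) (hMp : M p = -κ)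
    (hMρ : ‖M‖ * ρ ≤ κ / 4) (hN : 0 ≤ N) (hNρ : N * ρ ≤ κ / 4)
    (hw : ∀ x ∈ closedBall (r • p) (r * ρ), |w x - max (xn x) 0 * M x| ≤ r ^ 2 * (ρ ^ 2 / 4))
    (hx : x ∈ sphere (r • p) (r * ρ)) :
    w x - paraboloid (-(r * κ / 2)) (-N) 1 (r • p) x <
      w (r • p) - paraboloid (-(r * κ / 2)) (-N) 1 (r • p) (r • p) := by
  have hxball := sphere_subset_closedBall hx
  rw [mem_sphere_iff_norm] at hx
  have hMx : M x ≤ -(3 / 4) * (r * κ) := by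
    have hdiff : |M x - r * M p| ≤ ‖M‖ * (r * ρ) := by
      simpa [hx] using M.le_opNorm (x - r • p)
    rw [hMp] at hdiff
    nlinarith [(abs_le.1 hdiff).2]
  have htx : N * |xn x| ≤ r * κ / 4 := by
    have hxn := abs_xn_sub_smul_le hxball
    rw [hp, mul_zero, sub_zero] at hxn
    nlinarith
  have hkink := max_mul_add_mul_add_mul_sq_nonpos hMx hN htx
  have hcenter := (abs_le.1 (hw (r • p) (mem_closedBall_self (by positivity)))).1
  have hwx := (abs_le.1 (hw x hxball)).2
  simp only [paraboloid, xn_smul, hp, mul_zero, sub_self, norm_zero, hx, max_self, zero_mul,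
    sub_zero] at hcenter ⊢
  nlinarith [mul_pos (pow_pos hr 2) (pow_pos hρ 2)]

theorem paraboloid_slope_eq_zero_of_isLocalMax_sub {w : En n → ℝ} {A b D : ℝ} {q x : En n}
    (hw : HasFDerivAt w (0 : En n →L[ℝ] ℝ) x)
    (hmax : IsLocalMax (fun y => w y - paraboloid A b D q y) x) :
    A + 2 * b * xn x + 2 * D * (xn x - xn q) = 0 := by
  have hzero := hmax.hasFDerivAt_eq_zero
    (hw.sub (twiceDifferentiableAt_paraboloid A b D q x).1.self_of_nhds.hasFDerivAt)
  rw [zero_sub, neg_eq_zero] at hzero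
  rw [← fderiv_paraboloid_lastBasisVec, hzero, zero_apply]

theorem nonneg_of_isLittleO_sub_max_mul {w : En n → ℝ} {M : En n →L[ℝ] ℝ} {k : ℝ} {p : En n}
    (hin : ∀ᶠ x in 𝓝[Ω] 0, TwiceDifferentiableAt w x ∧ k < lapAt w x)
    (hout : ∀ᶠ x in 𝓝[Ωᶜ] 0, HasFDerivAt w (0 : En n →L[ℝ] ℝ) x)
    (hexp : (fun x => w x - max (xn x) 0 * M x) =o[𝓝 0] fun x => ‖x‖ ^ 2) (hp : xn p = 0) :
    0 ≤ M p := by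
  by_contra! hMp
  obtain ⟨κ, hκ⟩ : ∃ κ, M p = -κ := ⟨-M p, (neg_neg _).symm⟩
  have hκ₀ : 0 < κ := by linarith
  obtain ⟨N, hNk⟩ : ∃ N : ℝ, N = n + |k| := ⟨_, rfl⟩
  have hN : 1 ≤ N := hNk ▸ le_add_of_le_of_nonneg (Nat.one_le_cast.2 NeZero.one_le) (abs_nonneg k)
  obtain ⟨ρ, hρ, hMNρ⟩ : ∃ ρ > 0, (‖M‖ + N) * ρ < κ / 4 :=
    exists_pos_mul_lt (by positivity) (‖M‖ + N)
  have hMρ : 0 ≤ ‖M‖ * ρ := by positivity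
  have hNρ : 0 ≤ N * ρ := by positivity
  rw [add_mul] at hMNρ
  obtain ⟨r, ⟨hw, hrin, hrout⟩, hr : 0 < r⟩ :=
    (((eventually_forall_closedBall_smul_abs_le hexp p hρ (c := ρ ^ 2 / 4)
      (by positivity)).and ((eventually_forall_mem_closedBall_smul
        (eventually_nhdsWithin_iff.1 hin) p ρ).and (eventually_forall_mem_closedBall_smul
        (eventually_nhdsWithin_iff.1 hout) p ρ))).and self_mem_nhdsWithin).exists
  have hcont : ContinuousOn w (closedBall (r • p) (r * ρ)) := fun x hx => by
    by_cases hxΩ : x ∈ Ω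
    exacts [(hrin x hx hxΩ).1.continuousAt.continuousWithinAt,
      (hrout x hx hxΩ).continuousAt.continuousWithinAt]
  obtain ⟨x, hx, hmax⟩ := exists_isLocalMax_mem_ball (by positivity)
    (hcont.sub (continuous_paraboloid (-(r * κ / 2)) (-N) 1 (r • p)).continuousOn) fun x hx =>
      sub_paraboloid_lt_of_mem_sphere hr hρ hp hκ (by linarith) (by positivity) (by linarith) hw hx
  have hxball := ball_subset_closedBall hx
  by_cases hxΩ : x ∈ Ω
  · have hle := lapAt_le_lapAt_of_isLocalMax_sub (hrin x hxball hxΩ).1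
      (twiceDifferentiableAt_paraboloid _ _ _ _ x) hmax
    rw [lapAt_paraboloid] at hle
    linarith [(hrin x hxball hxΩ).2, neg_abs_le k, abs_nonneg k]
  · have hslope := paraboloid_slope_eq_zero_of_isLocalMax_sub (hrout x hxball hxΩ) hmax
    have hxn := abs_xn_sub_smul_le hxball
    rw [xn_smul, hp] at hslope
    rw [hp, mul_zero, sub_zero] at hxn
    nlinarith [mul_pos hr hκ₀, neg_abs_le (xn x)]

theorem eq_smul_xnCLM_of_isLittleO_sub_max_mul {w : En n → ℝ} {M : En n →L[ℝ] ℝ} {k : ℝ}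
    (hin : ∀ᶠ x in 𝓝[Ω] 0, TwiceDifferentiableAt w x ∧ k < lapAt w x)
    (hout : ∀ᶠ x in 𝓝[Ωᶜ] 0, HasFDerivAt w (0 : En n →L[ℝ] ℝ) x)
    (hexp : (fun x => w x - max (xn x) 0 * M x) =o[𝓝 0] fun x => ‖x‖ ^ 2) :
    M = M (lastBasisVec n) • xnCLM n := by
  ext x
  have hker : xn (x - xn x • lastBasisVec n) = 0 := by
    rw [← xnCLM_apply, map_sub, map_smul, xnCLM_apply, xnCLM_apply, xn_lastBasisVec, smul_eq_mul,
      mul_one, sub_self]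
  have hpos := nonneg_of_isLittleO_sub_max_mul hin hout hexp hker
  have hneg := nonneg_of_isLittleO_sub_max_mul hin hout hexp
    (p := -(x - xn x • lastBasisVec n)) (by rw [← neg_one_smul ℝ, xn_smul, hker, mul_zero])
  simp only [map_neg, map_sub, map_smul, smul_eq_mul] at hpos hneg
  simp only [smul_apply, xnCLM_apply, smul_eq_mul]
  linarith

theorem TangentHalfSpace.nonpos_of_tendsto_lapAt (hΩ : TangentHalfSpace Ω) {v : En n → ℝ} {μ : ℝ}
    (hdiff : ∀ᶠ x in 𝓝[Ω] 0, TwiceDifferentiableAt v x)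
    (hlap : Tendsto (lapAt v) (𝓝[Ω] 0) (𝓝 μ)) (hv : v =o[𝓝[Ω] 0] fun x => ‖x‖ ^ 2) : μ ≤ 0 := by
  by_contra! hμ
  have hn : (0 : ℝ) < n := Nat.cast_pos.2 (NeZero.pos n)
  let D : ℝ := μ / (4 * n)
  have hD : 0 < D := by positivity
  have hDeq : 2 * n * D = μ / 2 := by simp only [D]; field_simp; norm_num
  have hvsmall : ∀ᶠ x in 𝓝[Ω] 0, |v x| ≤ D / 32 * ‖x‖ ^ 2 := by
    simpa using isLittleO_iff.1 hv (show 0 < D / 32 by positivity)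
  obtain ⟨r, hball, hr : 0 < r⟩ := ((hΩ.eventually_forall_mem_closedBall (p := lastBasisVec n)
    (ρ := 1 / 2) (hdiff.and (hvsmall.and (hlap.eventually_const_lt (half_lt_self hμ))))
    (by norm_num) (by rw [xn_lastBasisVec]; norm_num)).and self_mem_nhdsWithin).exists
  let q : En n := r • lastBasisVec n
  have hvball : ∀ x ∈ closedBall q (r * (1 / 2)), |v x| ≤ D * r ^ 2 * (9 / 128) := fun x hx => by
    refine (hball x hx).2.2.1.trans ?_
    have hnorm := norm_le_of_mem_closedBall_smul hr.le hx
    rw [norm_lastBasisVec] at hnorm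
    calc D / 32 * ‖x‖ ^ 2 ≤ D / 32 * (r * (1 + 1 / 2)) ^ 2 := by gcongr
      _ = D * r ^ 2 * (9 / 128) := by ring
  obtain ⟨x, hx, hmax⟩ : ∃ x ∈ ball q (r * (1 / 2)),
      IsLocalMax (fun x => v x - paraboloid 0 0 D q x) x := by
    refine exists_isLocalMax_mem_ball (by positivity) (ContinuousOn.sub (fun x hx =>
      (hball x hx).2.1.continuousAt.continuousWithinAt)
      (continuous_paraboloid _ _ _ _).continuousOn) fun x hx => ?_
    have hcenter := (abs_le.1 (hvball q (mem_closedBall_self (by positivity)))).1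
    have hvx := (abs_le.1 (hvball x (sphere_subset_closedBall hx))).2
    rw [mem_sphere_iff_norm] at hx
    simp only [paraboloid, hx, sub_self, norm_zero]
    nlinarith [mul_pos hD (pow_pos hr 2)]
  obtain ⟨-, hdiffx, -, hlapx⟩ := hball x (ball_subset_closedBall hx)
  have hle := lapAt_le_lapAt_of_isLocalMax_sub hdiffx
    (twiceDifferentiableAt_paraboloid _ _ _ _ x) hmax
  rw [lapAt_paraboloid] at hle
  linarith

theorem TangentHalfSpace.eq_zero_of_tendsto_lapAt (hΩ : TangentHalfSpace Ω) {v : En n → ℝ} {μ : ℝ}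
    (hdiff : ∀ᶠ x in 𝓝[Ω] 0, TwiceDifferentiableAt v x)
    (hlap : Tendsto (lapAt v) (𝓝[Ω] 0) (𝓝 μ)) (hv : v =o[𝓝[Ω] 0] fun x => ‖x‖ ^ 2) : μ = 0 := by
  refine le_antisymm (hΩ.nonpos_of_tendsto_lapAt hdiff hlap hv) (neg_nonpos.1 ?_)
  refine hΩ.nonpos_of_tendsto_lapAt (v := fun x => -v x) (hdiff.mono fun x hx => hx.neg) ?_
    hv.neg_left
  exact hlap.neg.congr fun x => (lapAt_neg v x).symm

end MaximumPrinciple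

section BoundaryValues

theorem tendsto_nhdsWithin_of_continuousOn_closure_inter {X Y : Type*} [TopologicalSpace X]
    [TopologicalSpace Y] {s U : Set X} {f : X → Y} {z : X} (hU : IsOpen U)
    (hf : ContinuousOn f (closure s ∩ U)) (hzs : z ∈ frontier s) (hzU : z ∈ U) :
    Tendsto f (𝓝[s] z) (𝓝 (f z)) := by
  refine (hf z ⟨frontier_subset_closure hzs, hzU⟩).mono_left (nhdsWithin_le_iff.2 ?_)
  exact inter_mem (mem_of_superset self_mem_nhdsWithin subset_closure)
    (mem_nhdsWithin_of_mem_nhds (hU.mem_nhds hzU))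

theorem fderiv_eq_innerBilin {m : ℕ} {f : En m → ℝ} {x v : En m}
    (hv : ∀ i, fderiv ℝ f x (EuclideanSpace.single i 1) = v i) :
    fderiv ℝ f x = innerBilin m v := by
  refine ContinuousLinearMap.coe_injective
    ((EuclideanSpace.basisFun (Fin m) ℝ).toBasis.ext fun i => ?_)
  simp [hv, innerBilin_apply, EuclideanSpace.inner_single_right]

theorem tendsto_fderiv_zero_of_tendsto_gradient {m : ℕ} {f : En m → ℝ} {Df : En m → En m}
    {l : Filter (En m)} (hgrad : ∀ᶠ x in l, ∀ i, fderiv ℝ f x (EuclideanSpace.single i 1) = Df x i)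
    (hDf : Tendsto Df l (𝓝 0)) : Tendsto (fderiv ℝ f) l (𝓝 0) := by
  refine (((innerBilin m).continuous.tendsto' 0 0 (map_zero _)).comp hDf).congr' ?_
  filter_upwards [hgrad] with x hx using (fderiv_eq_innerBilin hx).symm

end BoundaryValues

section MainTheorem

variable {Ω : Set (En n)} {u : En n → ℝ} {μ : ℝ}

theorem TangentHalfSpace.exists_quadFun_eq_xn_mul (hΩ : TangentHalfSpace Ω) (hΩo : IsOpen Ω)
    {a : ℝ} {L : En n →L[ℝ] ℝ} {B : En n →L[ℝ] En n →L[ℝ] ℝ}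
    (hfderiv : HasFDerivAt (Ω.indicator u) (0 : En n →L[ℝ] ℝ) 0)
    (hfr : ∀ᶠ z in 𝓝[frontier Ω] 0, Tendsto u (𝓝[Ω] z) (𝓝 0))
    (hexp : (fun x => u x - quadFun a L B x) =o[𝓝[Ω] 0] fun x => ‖x‖ ^ 2) :
    ∃ M : En n →L[ℝ] ℝ, ∀ x, quadFun a L B x = xn x * M x := by
  obtain ⟨rfl, rfl⟩ : a = 0 ∧ L = 0 := by
    refine quadFun_lower_order_eq_zero (B := B) hΩ.uniqueDiffWithinAt hfderiv
      (indicator_of_notMem (hΩ.zero_notMem hΩo) u) (hexp.congr' ?_ EventuallyEq.rfl)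
    filter_upwards [self_mem_nhdsWithin] with x hx
    rw [indicator_of_mem hx]
  have hquad : ∀ x, quadFun 0 0 B x = B x x := fun x => by simp [quadFun]
  simp only [hquad] at hexp ⊢
  have hBfr : (fun z => B z z) =o[𝓝[frontier Ω] 0] fun z => ‖z‖ ^ 2 :=
    isLittleO_nhdsWithin_frontier (by fun_prop) (by fun_prop) hexp hfr
  exact exists_eq_mul_of_forall_ker_eq_zero (ℓ := xnCLM n) (e := lastBasisVec n) xn_lastBasisVec
    fun p hp => apply_self_eq_zero_of_mem_tangentConeAt hBfr (hΩ.mem_tangentConeAt_frontier hΩo hp)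

theorem TangentHalfSpace.exists_quadFun_eq_mul_xn_sq (hΩ : TangentHalfSpace Ω) (hΩo : IsOpen Ω)
    {a k : ℝ} {L : En n →L[ℝ] ℝ} {B : En n →L[ℝ] En n →L[ℝ] ℝ}
    (hin : ∀ᶠ x in 𝓝[Ω] 0, TwiceDifferentiableAt u x ∧ k < lapAt u x)
    (hfr : ∀ᶠ z in 𝓝[frontier Ω] 0,
      Tendsto u (𝓝[Ω] z) (𝓝 0) ∧ Tendsto (fderiv ℝ u) (𝓝[Ω] z) (𝓝 0))
    (hexp : (fun x => u x - quadFun a L B x) =o[𝓝[Ω] 0] fun x => ‖x‖ ^ 2) :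
    ∃ c : ℝ, ∀ x, quadFun a L B x = c * xn x ^ 2 := by
  have hout : ∀ᶠ x in 𝓝[Ωᶜ] 0, HasFDerivAt (Ω.indicator u) (0 : En n →L[ℝ] ℝ) x :=
    eventually_hasFDerivAt_indicator_zero hΩo (hin.mono fun _ hx => hx.1.1.self_of_nhds) hfr
  obtain ⟨M, hM⟩ := hΩ.exists_quadFun_eq_xn_mul hΩo
    (hout.self_of_nhdsWithin (hΩ.zero_notMem hΩo)) (hfr.mono fun _ hz => hz.1) hexp
  simp only [hM] at hexp
  have hin' : ∀ᶠ x in 𝓝[Ω] 0,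
      TwiceDifferentiableAt (Ω.indicator u) x ∧ k < lapAt (Ω.indicator u) x := by
    filter_upwards [hin, self_mem_nhdsWithin] with x hx hxΩ
    have heq : Ω.indicator u =ᶠ[𝓝 x] u :=
      (hΩo.eventually_mem hxΩ).mono fun y hy => indicator_of_mem hy u
    exact ⟨hx.1.congr heq, (lapAt_congr heq).symm ▸ hx.2⟩
  have hMeq := eq_smul_xnCLM_of_isLittleO_sub_max_mul hin' hout
    (hΩ.isLittleO_indicator_sub_max_mul hexp)
  refine ⟨M (lastBasisVec n), fun x => ?_⟩
  rw [hM, hMeq, smul_apply, smul_apply, xnCLM_apply, xnCLM_apply, xn_lastBasisVec, smul_eq_mul,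
    smul_eq_mul]
  ring

theorem TangentHalfSpace.eq_half_of_isLittleO_sub_mul_xn_sq (hΩ : TangentHalfSpace Ω) {c : ℝ}
    (hdiff : ∀ᶠ x in 𝓝[Ω] 0, TwiceDifferentiableAt u x)
    (hlap : Tendsto (lapAt u) (𝓝[Ω] 0) (𝓝 μ))
    (hexp : (fun x => u x - c * xn x ^ 2) =o[𝓝[Ω] 0] fun x => ‖x‖ ^ 2) : c = μ / 2 := by
  have hpar : ∀ x : En n, paraboloid 0 c 0 0 x = c * xn x ^ 2 := fun x => by simp [paraboloid]
  have hpar_diff := twiceDifferentiableAt_paraboloid (n := n) 0 c 0 0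
  simp only [← hpar] at hexp
  have hlim : Tendsto (lapAt fun x => u x - paraboloid 0 c 0 0 x) (𝓝[Ω] 0) (𝓝 (μ - 2 * c)) := by
    refine (hlap.sub_const (2 * c)).congr' ?_
    filter_upwards [hdiff] with x hx
    rw [lapAt_sub hx (hpar_diff x), lapAt_paraboloid, mul_zero, add_zero]
  linarith [hΩ.eq_zero_of_tendsto_lapAt (hdiff.mono fun x hx => hx.sub (hpar_diff x)) hlim hexp]

theorem stmt_16_general (hΩo : IsOpen Ω) (hΩ : TangentHalfSpace Ω)
    (hdiff : ∀ᶠ x in 𝓝[Ω] 0, TwiceDifferentiableAt u x)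
    (hlap : Tendsto (lapAt u) (𝓝[Ω] 0) (𝓝 μ))
    (hfr : ∀ᶠ z in 𝓝[frontier Ω] 0,
      Tendsto u (𝓝[Ω] z) (𝓝 0) ∧ Tendsto (fderiv ℝ u) (𝓝[Ω] z) (𝓝 0))
    {P₂ : MvPolynomial (Fin n) ℝ} (hP₂ : P₂.totalDegree ≤ 2)
    (htaylor : (fun x => u x - peval P₂ x) =o[𝓝[Ω] 0] fun x => ‖x‖ ^ 2) :
    P₂ = C (μ / 2) * X (lastIdx n) ^ 2 := by
  obtain ⟨a, L, B, hquad⟩ := exists_quadFun_eq_peval hP₂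
  obtain ⟨c, hc⟩ := hΩ.exists_quadFun_eq_mul_xn_sq hΩo
    (hdiff.and (hlap.eventually_const_lt (sub_one_lt μ))) hfr (hquad ▸ htaylor)
  simp only [hquad, hc] at htaylor
  rw [← hΩ.eq_half_of_isLittleO_sub_mul_xn_sq hdiff hlap htaylor]
  refine MvPolynomial.funext fun y => ?_
  simpa [peval, xn, ← hquad] using hc (WithLp.toLp 2 y)

end MainTheorem

/-- at a free boundary point of the obstacle-type problem (`Δu = 1` in
`Ω∩B₁`, `u = |Du| = 0` on `∂Ω∩B₁`, `∂Ω ∈ C^{1,α}(0)`), the second-order Taylor polynomial of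
`u` at `0` is `x_n²/2`. -/
theorem stmt_16 (n : ℕ) [NeZero n] (hn : 2 ≤ n) (α : ℝ) (hα0 : 0 < α) (hα1 : α < 1)
    (Ω : Set (En n)) (u : En n → ℝ) (Du : En n → En n)
    (P₂ : MvPolynomial (Fin n) ℝ) (K KΩ : ℝ)
    (hΩo : IsOpen Ω) (hΩc : IsConnected Ω) (hΩb : IsBounded Ω)
    (h0 : (0 : En n) ∈ frontier Ω)
    -- `∂Ω ∈ C^{1,α}(0)`
    (hKΩ : 0 ≤ KΩ) (hdom : Domain1α α KΩ Ω)
    -- `u` is continuous on `Ω̄ ∩ B₁` and `C¹` up to `∂Ω ∩ B₁`, with gradient `Du`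
    (hu : ContinuousOn u (closure Ω ∩ ball 0 1))
    (hDu : ContinuousOn Du (closure Ω ∩ ball 0 1))
    -- `Δu = 1` in `Ω ∩ B₁`
    (heq : ∀ x ∈ Ω ∩ ball (0 : En n) 1,
      DifferentiableAt ℝ u x ∧
      (∀ i, fderiv ℝ u x (EuclideanSpace.single i 1) = Du x i) ∧
      DifferentiableAt ℝ (fderiv ℝ u) x ∧ lapAt u x = 1)
    -- `u = |Du| = 0` on `∂Ω ∩ B₁`
    (hbd : ∀ x ∈ frontier Ω ∩ ball (0 : En n) 1, u x = 0 ∧ Du x = 0)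
    -- `u ∈ C^{2,α}(0)` with polynomial `P₂`
    (hP₂ : P₂.totalDegree ≤ 2)
    (hK : 0 ≤ K)
    (htaylor : ∀ x ∈ Ω ∩ ball (0 : En n) 1,
      |u x - peval P₂ x| ≤ K * ‖x‖ ^ ((2 : ℝ) + α)) :
    P₂ = MvPolynomial.C (1 / 2 : ℝ) * MvPolynomial.X (lastIdx n) ^ 2 := by
  have hnear : ∀ z ∈ ball (0 : En n) 1, Ω ∩ ball 0 1 ∈ 𝓝[Ω] z := fun z hz =>
    inter_mem self_mem_nhdsWithin (mem_nhdsWithin_of_mem_nhds (isOpen_ball.mem_nhds hz))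
  have hnear₀ := hnear 0 (mem_ball_self one_pos)
  refine stmt_16_general (u := u) hΩo (hdom.tangentHalfSpace hα0 hKΩ) ?twiceDiff ?laplacian
    ?boundary hP₂ (IsBigO.trans_isLittleO (.of_bound' ?taylor)
      ((isLittleO_mul_norm_rpow_add K 2 hα0).mono nhdsWithin_le_nhds))
  case twiceDiff =>
    filter_upwards [hnear₀] with x hx
    exact ⟨((hΩo.inter isOpen_ball).eventually_mem hx).mono fun y hy => (heq y hy).1,
      (heq x hx).2.2.1⟩
  case laplacian =>
    refine tendsto_const_nhds.congr' ?_
    filter_upwards [hnear₀] with x hx using (heq x hx).2.2.2.symm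
  case boundary =>
    filter_upwards [self_mem_nhdsWithin, mem_nhdsWithin_of_mem_nhds (ball_mem_nhds 0 one_pos)]
      with z hzfr hz
    have hlim := tendsto_nhdsWithin_of_continuousOn_closure_inter isOpen_ball hu hzfr hz
    have hDlim := tendsto_nhdsWithin_of_continuousOn_closure_inter isOpen_ball hDu hzfr hz
    rw [(hbd z ⟨hzfr, hz⟩).1] at hlim
    rw [(hbd z ⟨hzfr, hz⟩).2] at hDlim
    exact ⟨hlim, tendsto_fderiv_zero_of_tendsto_gradient
      (by filter_upwards [hnear z hz] with x hx using (heq x hx).2.1) hDlim⟩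
  case taylor =>
    filter_upwards [hnear₀] with x hx using (htaylor x hx).trans (le_abs_self _)
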